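/- arXiv:2505.10000 — 3 statements merged into one kernel-verified Lean document; each statement's English description precedes it below -/
import Mathlib

section
/- Let G be a group, σ : G → G a group homomorphism, and w ∈ G. Let K and A be subgroups of G such that: (i) a·K·a⁻¹ ⊆ K for every a ∈ A; (ii) K ∩ A = {1}; (iii) for every a ∈ A, the element w·σ(a)·w⁻¹ lies in the set K·A of products of an element of K and an element of A. Let φ : A → A be the (well-defined, by (ii) and (iii)) map characterized by w·σ(a)·w⁻¹ ∈ K·φ(a), and assume there exists an integer N ≥ 1 such that the N-fold composite φ^N sends every element of A to the identity. Then for every g ∈ G with g⁻¹·σ(g)·w⁻¹ ∈ K·A, there exists a unique a ∈ A such that (g·a)⁻¹·σ(g·a)·w⁻¹ ∈ K. -/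
/-- Let `G` be a group, `σ : G → G` a group homomorphism, `w ∈ G`, and
`K, A ≤ G` subgroups with: (i) `A` normalizes into `K`; (ii) `K ∩ A = 1`;
(iii) for every `a ∈ A`, `w σ(a) w⁻¹ ∈ K · A`. Let `φ` be the map characterized on `A`
by `w σ(a) w⁻¹ ∈ K · φ(a)` (with values in `A`), and suppose the `N`-fold composite of
`φ` (some `N ≥ 1`) sends every element of `A` to the identity. Then every `g ∈ G` with
`g⁻¹ σ(g) w⁻¹ ∈ K · A` admits a unique `a ∈ A` with `(g a)⁻¹ σ(g a) w⁻¹ ∈ K`. -/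
theorem statement7 (G : Type*) [Group G] (σ : G →* G) (w : G) (K A : Subgroup G)
    (hconj : ∀ a ∈ A, ∀ x ∈ K, a * x * a⁻¹ ∈ K)
    (hinter : K ⊓ A = ⊥)
    (φ : G → G) (hφmem : ∀ a ∈ A, φ a ∈ A)
    (hφ : ∀ a ∈ A, ∃ k ∈ K, w * σ a * w⁻¹ = k * φ a)
    (N : ℕ) (hN : 1 ≤ N) (hφN : ∀ a ∈ A, φ^[N] a = 1) :
    ∀ g : G, (∃ k ∈ K, ∃ a ∈ A, g⁻¹ * σ g * w⁻¹ = k * a) →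
      ∃! a : G, a ∈ A ∧ (g * a)⁻¹ * σ (g * a) * w⁻¹ ∈ K := by
  rintro g ⟨k, hk, b, hb, hg⟩
  have htriv : ∀ x, x ∈ K → x ∈ A → x = 1 := fun x h1 h2 => by
    have : x ∈ K ⊓ A := ⟨h1, h2⟩
    rwa [hinter, Subgroup.mem_bot] at this
  -- `φ` is multiplicative on `A`
  have hmul : ∀ a ∈ A, ∀ c ∈ A, φ (a * c) = φ a * φ c := by
    intro a ha c hc
    obtain ⟨k1, hk1, e1⟩ := hφ a ha
    obtain ⟨k2, hk2, e2⟩ := hφ c hc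
    obtain ⟨k3, hk3, e3⟩ := hφ (a * c) (A.mul_mem ha hc)
    have e : k3 * φ (a * c) = k1 * φ a * (k2 * φ c) := by
      rw [← e1, ← e2, ← e3, map_mul]; group
    have e' : φ (a * c) * (φ a * φ c)⁻¹ = k3⁻¹ * (k1 * (φ a * k2 * (φ a)⁻¹)) := by
      have : φ (a * c) = k3⁻¹ * (k1 * φ a * (k2 * φ c)) := by rw [← e]; group
      rw [this]; group
    refine mul_inv_eq_one.mp (htriv _ ?_ ?_)
    · rw [e']
      exact K.mul_mem (K.inv_mem hk3) (K.mul_mem hk1 (hconj _ (hφmem a ha) _ hk2))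
    · exact A.mul_mem (hφmem _ (A.mul_mem ha hc))
        (A.inv_mem (A.mul_mem (hφmem a ha) (hφmem c hc)))
  -- the condition is a fixed point equation
  have hiff : ∀ a ∈ A, ((g * a)⁻¹ * σ (g * a) * w⁻¹ ∈ K ↔ b * φ a = a) := by
    intro a ha
    obtain ⟨k1, hk1, e1⟩ := hφ a ha
    have e : (g * a)⁻¹ * σ (g * a) * w⁻¹ =
        (a⁻¹ * k * a⁻¹⁻¹) * ((a⁻¹ * b) * k1 * (a⁻¹ * b)⁻¹) * (a⁻¹ * (b * φ a)) := by
      have : (g * a)⁻¹ * σ (g * a) * w⁻¹ =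
          a⁻¹ * (g⁻¹ * σ g * w⁻¹) * (w * σ a * w⁻¹) := by rw [map_mul]; group
      rw [this, hg, e1]; group
    have hK := K.mul_mem (hconj _ (A.inv_mem ha) _ hk)
      (hconj _ (A.mul_mem (A.inv_mem ha) hb) _ hk1)
    rw [e, K.mul_mem_cancel_left hK]
    constructor
    · intro h
      exact (inv_mul_eq_one.mp (htriv _ h
        (A.mul_mem (A.inv_mem ha) (A.mul_mem hb (hφmem a ha))))).symm
    · intro h
      rw [h, inv_mul_cancel]; exact K.one_mem
  let T : G → G := fun a => b * φ a
  have hTA : ∀ a ∈ A, T a ∈ A := fun a ha => A.mul_mem hb (hφmem a ha)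
  have hTn : ∀ n : ℕ, ∀ a ∈ A, T^[n] a ∈ A ∧ φ^[n] a ∈ A ∧ T^[n] a = T^[n] 1 * φ^[n] a := by
    intro n
    induction n with
    | zero => intro a ha; simpa using ha
    | succ n ih =>
      intro a ha
      obtain ⟨h1, h2, h3⟩ := ih a ha
      obtain ⟨h4, -, -⟩ := ih 1 A.one_mem
      simp only [Function.iterate_succ_apply']
      refine ⟨hTA _ h1, hφmem _ h2, ?_⟩
      rw [h3]
      change b * φ _ = b * φ _ * _
      rw [hmul _ h4 _ h2, mul_assoc]
  have hTN : ∀ a ∈ A, T^[N] a = T^[N] 1 := fun a ha => by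
    rw [(hTn N a ha).2.2, hφN a ha, mul_one]
  have hc := (hTn N 1 A.one_mem).1
  refine ⟨T^[N] 1, ⟨hc, (hiff _ hc).2 ?_⟩, ?_⟩
  · change T (T^[N] 1) = _
    rw [← Function.iterate_succ_apply' T, Function.iterate_succ_apply]
    exact hTN _ (hTA _ A.one_mem)
  · rintro a ⟨ha, h⟩
    have hf : T a = a := (hiff a ha).1 h
    rw [← hTN a ha, Function.iterate_fixed hf]
end

section
/- Let p be a prime and f ≥ 1 an integer, and set q = p^f. Let A be a commutative ring of characteristic p, let ϖ ∈ A, and assume A is adically complete (complete and separated) with respect to the ideal generated by ϖ. Let σ : A → A be the q-power Frobenius ring homomorphism x ↦ x^q, applied entrywise to matrices, and let σ̄ denote the induced endomorphism of A/(ϖ). Fix n ≥ 1, let g ∈ GLₙ(A), and let h₀ ∈ GLₙ(A/(ϖ)) satisfy h₀ · σ̄(h₀)⁻¹ = ḡ, where ḡ is the image of g in GLₙ(A/(ϖ)). Then there exists a unique h ∈ GLₙ(A) whose image in GLₙ(A/(ϖ)) equals h₀ and which satisfies h · σ(h)⁻¹ = g. -/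
theorem frob_mem_aux {A : Type*} [CommRing A] (I : Ideal A) (q : ℕ) (hq : 2 ≤ q) (m : ℕ) (x : A)
    (hx : x ∈ I ^ (m + 1)) : x ^ q ∈ I ^ (m + 2) := by
  have h1 : x ^ q ∈ (I ^ (m + 1)) ^ q := Ideal.pow_mem_pow hx q
  rw [← pow_mul] at h1
  exact Ideal.pow_le_pow_right (by nlinarith) h1

theorem matmul_mem_aux {A : Type*} [CommRing A] {n : ℕ} (J : Ideal A)
    (g X : Matrix (Fin n) (Fin n) A)
    (hX : ∀ i j, X i j ∈ J) (i j : Fin n) : (g * X) i j ∈ J := by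
  rw [Matrix.mul_apply]
  exact Ideal.sum_mem _ fun k _ => J.mul_mem_left _ (hX k j)

theorem step_mem_aux {A : Type*} [CommRing A] {n : ℕ} (I : Ideal A) (q : ℕ) (hq : 2 ≤ q)
    (σ : A →+* A) (hσ : ∀ x : A, σ x = x ^ q)
    (g X Y : Matrix (Fin n) (Fin n) A) (m : ℕ)
    (h : ∀ i j, X i j - Y i j ∈ I ^ (m + 1)) (i j : Fin n) :
    (g * X.map σ) i j - (g * Y.map σ) i j ∈ I ^ (m + 2) := by
  rw [← Matrix.sub_apply, ← Matrix.mul_sub]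
  apply matmul_mem_aux
  intro i j
  rw [Matrix.sub_apply, Matrix.map_apply, Matrix.map_apply, ← map_sub, hσ]
  exact frob_mem_aux I q hq m _ (h i j)

theorem fixed_exists_aux {A : Type*} [CommRing A] {n : ℕ} (I : Ideal A) [IsAdicComplete I A]
    (q : ℕ) (hq : 2 ≤ q) (σ : A →+* A) (hσ : ∀ x : A, σ x = x ^ q)
    (g M : Matrix (Fin n) (Fin n) A)
    (hM : ∀ i j, (g * M.map σ) i j - M i j ∈ I) :
    ∃ L : Matrix (Fin n) (Fin n) A, (∀ i j, L i j - M i j ∈ I) ∧ L = g * L.map σ := by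
  let T : Matrix (Fin n) (Fin n) A → Matrix (Fin n) (Fin n) A := fun X => g * X.map σ
  let S : ℕ → Matrix (Fin n) (Fin n) A := fun k => T^[k] M
  have hS : ∀ k, S (k + 1) = g * (S k).map σ := fun k => Function.iterate_succ_apply' T k M
  have hS0 : S 0 = M := rfl
  have hd : ∀ k i j, S (k + 1) i j - S k i j ∈ I ^ (k + 1) := by
    intro k
    induction k with
    | zero => intro i j; rw [hS, hS0]; simpa using hM i j
    | succ k ih =>
      intro i j
      rw [hS (k + 1)]
      nth_rewrite 2 [hS k]
      exact step_mem_aux I q hq σ hσ g _ _ k ih i j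
  have hc : ∀ i j (a b : ℕ), a ≤ b → S b i j - S a i j ∈ I ^ a := by
    intro i j a b hab
    induction b, hab using Nat.le_induction with
    | base => simp
    | succ b hab ih =>
      have := add_mem (Ideal.pow_le_pow_right (by omega : a ≤ b + 1) (hd b i j)) ih
      simpa using this
  have hl : ∀ i j, ∃ l : A, ∀ k, S k i j - l ∈ I ^ k := by
    intro i j
    obtain ⟨l, hl⟩ := IsPrecomplete.prec (I := I) (M := A) inferInstance
      (f := fun k => S k i j) (by
        intro a b hab
        rw [SModEq.sub_mem, smul_eq_mul, Ideal.mul_top, ← neg_mem_iff, neg_sub]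
        exact hc i j a b hab)
    refine ⟨l, fun k => ?_⟩
    have := hl k
    rwa [SModEq.sub_mem, smul_eq_mul, Ideal.mul_top] at this
  choose l hl using hl
  let L : Matrix (Fin n) (Fin n) A := Matrix.of l
  have hL : ∀ k i j, S k i j - L i j ∈ I ^ k := fun k i j => hl i j k
  refine ⟨L, fun i j => ?_, ?_⟩
  · have h1 := sub_mem (hd 0 i j) (hL 1 i j)
    rw [hS0, zero_add, pow_one] at h1
    simpa using h1
  · ext i j
    rw [IsHausdorff.eq_iff_smodEq (I := I)]
    intro k
    rw [SModEq.sub_mem, smul_eq_mul, Ideal.mul_top]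
    have h1 := step_mem_aux I q hq σ hσ g _ _ k (hL (k + 1)) i j
    rw [← hS] at h1
    have h2 := sub_mem h1 (hL (k + 2) i j)
    rw [sub_sub_sub_cancel_left] at h2
    exact Ideal.pow_le_pow_right (by omega) h2

theorem fixed_unique_aux {A : Type*} [CommRing A] {n : ℕ} (I : Ideal A) [IsAdicComplete I A]
    (q : ℕ) (hq : 2 ≤ q) (σ : A →+* A) (hσ : ∀ x : A, σ x = x ^ q)
    (g X Y : Matrix (Fin n) (Fin n) A)
    (hX : X = g * X.map σ) (hY : Y = g * Y.map σ)
    (h : ∀ i j, X i j - Y i j ∈ I) : X = Y := by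
  have key : ∀ k i j, X i j - Y i j ∈ I ^ (k + 1) := by
    intro k
    induction k with
    | zero => simpa using h
    | succ k ih =>
      intro i j
      have := step_mem_aux I q hq σ hσ g _ _ k ih i j
      rwa [← hX, ← hY] at this
  ext i j
  rw [IsHausdorff.eq_iff_smodEq (I := I)]
  intro k
  rw [SModEq.sub_mem, smul_eq_mul, Ideal.mul_top]
  exact Ideal.pow_le_pow_right (by omega) (key k i j)


/-- Let `p` be a prime, `f ≥ 1`, `q = p ^ f`. Let `A` be a commutative
ring of characteristic `p`, `ϖ ∈ A`, with `A` adically complete with respect to the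
ideal `(ϖ)`. Let `σ : A → A` be the `q`-power Frobenius ring homomorphism, applied
entrywise to matrices, and `σ̄` the induced endomorphism of `A ⧸ (ϖ)`. Fix `n ≥ 1`,
`g ∈ GLₙ(A)`, and `h₀ ∈ GLₙ(A ⧸ (ϖ))` with `h₀ * σ̄(h₀)⁻¹ = ḡ`. Then there is a
unique `h ∈ GLₙ(A)` reducing to `h₀` with `h * σ(h)⁻¹ = g`. -/
theorem statement8 (p f n : ℕ) (hp : p.Prime) (hf : 1 ≤ f) (hn : 1 ≤ n)
    (A : Type*) [CommRing A] [CharP A p] (ϖ : A)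
    [IsAdicComplete (Ideal.span {ϖ}) A]
    (σ : A →+* A) (hσ : ∀ x : A, σ x = x ^ p ^ f)
    (σbar : A ⧸ Ideal.span {ϖ} →+* A ⧸ Ideal.span {ϖ})
    (hσbar : ∀ x : A ⧸ Ideal.span {ϖ}, σbar x = x ^ p ^ f)
    (g : GL (Fin n) A) (h₀ : GL (Fin n) (A ⧸ Ideal.span {ϖ}))
    (hcompat : h₀ * (Matrix.GeneralLinearGroup.map σbar h₀)⁻¹ =
      Matrix.GeneralLinearGroup.map (Ideal.Quotient.mk (Ideal.span {ϖ})) g) :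
    ∃! h : GL (Fin n) A,
      Matrix.GeneralLinearGroup.map (Ideal.Quotient.mk (Ideal.span {ϖ})) h = h₀ ∧
        h * (Matrix.GeneralLinearGroup.map σ h)⁻¹ = g := by
  have hq : 2 ≤ p ^ f := hp.two_le.trans (Nat.le_self_pow (by omega) p)
  generalize Ideal.span {ϖ} = I at *
  have hiff : ∀ h : GL (Fin n) A, h * (Matrix.GeneralLinearGroup.map σ h)⁻¹ = g ↔
      (h : Matrix (Fin n) (Fin n) A) = g * (h : Matrix (Fin n) (Fin n) A).map σ := by
    intro h
    rw [mul_inv_eq_iff_eq_mul, Units.ext_iff]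
    rfl
  have h0 : (h₀ : Matrix (Fin n) (Fin n) (A ⧸ I)) =
      (g : Matrix (Fin n) (Fin n) A).map (Ideal.Quotient.mk I) *
        (h₀ : Matrix (Fin n) (Fin n) (A ⧸ I)).map σbar := by
    rw [mul_inv_eq_iff_eq_mul, Units.ext_iff] at hcompat
    exact hcompat
  choose m hm using fun i j => Ideal.Quotient.mk_surjective (I := I) (h₀ i j)
  let M : Matrix (Fin n) (Fin n) A := Matrix.of m
  have hMm : M.map (Ideal.Quotient.mk I) = (h₀ : Matrix (Fin n) (Fin n) (A ⧸ I)) := by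
    ext i j; exact hm i j
  have hMσ : (M.map σ).map (Ideal.Quotient.mk I) =
      (h₀ : Matrix (Fin n) (Fin n) (A ⧸ I)).map σbar := by
    rw [← hMm]
    ext i j
    simp [hσ, hσbar]
  have hM : ∀ i j, ((g : Matrix (Fin n) (Fin n) A) * M.map σ) i j - M i j ∈ I := by
    intro i j
    rw [← Ideal.Quotient.eq]
    have h1 : ((g : Matrix (Fin n) (Fin n) A) * M.map σ).map (Ideal.Quotient.mk I) =
        M.map (Ideal.Quotient.mk I) := by
      rw [Matrix.map_mul, hMσ, hMm, ← h0]
    exact congrFun (congrFun h1 i) j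
  obtain ⟨L, hLM, hL⟩ := fixed_exists_aux I (p ^ f) hq σ hσ g M hM
  have hLm : L.map (Ideal.Quotient.mk I) = (h₀ : Matrix (Fin n) (Fin n) (A ⧸ I)) := by
    rw [← hMm]
    ext i j
    exact (Ideal.Quotient.eq).2 (hLM i j)
  have hLdet : IsUnit L.det := by
    have hj : I ≤ Ideal.jacobson ⊥ := IsAdicComplete.le_jacobson_bot I
    have := isLocalHom_of_le_jacobson_bot I hj
    apply isUnit_of_map_unit (Ideal.Quotient.mk I)
    rw [RingHom.map_det, RingHom.mapMatrix_apply, hLm]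
    exact (Matrix.isUnit_iff_isUnit_det _).1 h₀.isUnit
  obtain ⟨u, hu⟩ := (Matrix.isUnit_iff_isUnit_det _).2 hLdet
  refine ⟨u, ⟨?_, ?_⟩, ?_⟩
  · apply Units.ext
    rw [← hLm, ← hu]
    rfl
  · rw [hiff, hu]
    exact hL
  · rintro y ⟨hy1, hy2⟩
    apply Units.ext
    rw [hu]
    refine fixed_unique_aux I (p ^ f) hq σ hσ g _ _ ((hiff y).1 hy2) hL fun i j => ?_
    rw [← Ideal.Quotient.eq]
    have h1 : (y : Matrix (Fin n) (Fin n) A).map (Ideal.Quotient.mk I) =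
        L.map (Ideal.Quotient.mk I) := by
      rw [hLm, ← hy1]
      rfl
    exact congrFun (congrFun h1 i) j
end

section
/- Let V be a valuation ring whose field of fractions K is algebraically closed, and let n ≥ 1. Then every g ∈ GLₙ(K) admits a Cartan decomposition g = g₁ · D · g₂, where g₁ and g₂ lie in the image of the natural map GLₙ(V) → GLₙ(K), and D is a diagonal matrix with diagonal entries d₁, …, dₙ ∈ K, each nonzero, satisfying d_{i+1}/d_i ∈ V for every 1 ≤ i < n. -/
theorem smithAux (V : Type*) [CommRing V] [IsDomain V] [ValuationRing V] (n : ℕ) :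
    ∀ M : Matrix (Fin n) (Fin n) V, ∃ (P Q : Matrix (Fin n) (Fin n) V) (d : Fin n → V),
      IsUnit P.det ∧ IsUnit Q.det ∧ (∀ i j, i ≤ j → d i ∣ d j) ∧
      M = P * Matrix.diagonal d * Q := by
  induction n with
  | zero =>
    intro M
    exact ⟨1, 1, fun _ => 0, by simp, by simp, fun i => i.elim0, by ext i; exact i.elim0⟩
  | succ n ih =>
    -- the case where the top left entry divides everything
    have key : ∀ M : Matrix (Fin (n+1)) (Fin (n+1)) V, (∀ i j, M 0 0 ∣ M i j) →
        ∃ (P Q : Matrix (Fin (n+1)) (Fin (n+1)) V) (d : Fin (n+1) → V),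
        IsUnit P.det ∧ IsUnit Q.det ∧ (∀ i j, i ≤ j → d i ∣ d j) ∧
        M = P * Matrix.diagonal d * Q := by
      intro M hM
      choose W hW using hM
      obtain ⟨P, Q, d, hP, hQ, hd, h⟩ :=
        ih (Matrix.of fun i j => W i.succ j.succ - W i.succ 0 * W 0 j.succ)
      refine ⟨Matrix.of (Fin.cons (Fin.cons 1 fun _ => 0)
          fun i => Fin.cons (W i.succ 0) (P i)),
        Matrix.of (Fin.cons (Fin.cons 1 fun j => W 0 j.succ) fun i => Fin.cons 0 (Q i)),
        Fin.cons (M 0 0) (fun i => M 0 0 * d i), ?_, ?_, ?_, ?_⟩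
      · rw [Matrix.det_succ_row_zero, Fin.sum_univ_succ]
        have e : (Matrix.of fun i j => P i j) = P := rfl
        simpa [Matrix.submatrix, e] using hP
      · rw [Matrix.det_succ_column_zero, Fin.sum_univ_succ]
        have e : (Matrix.of fun i j => Q i j) = Q := rfl
        simpa [Matrix.submatrix, e] using hQ
      · intro i j
        refine Fin.cases ?_ (fun i => ?_) i <;> refine Fin.cases ?_ (fun j => ?_) j
        · simp
        · simp
        · simp
        · intro hij
          simpa using mul_dvd_mul_left (M 0 0) (hd i j (by simpa using hij))
      · ext i j
        refine Fin.cases ?_ (fun i => ?_) i <;> refine Fin.cases ?_ (fun j => ?_) j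
        · simp [Matrix.mul_apply, Fin.sum_univ_succ, Matrix.diagonal_apply]
        · rw [Matrix.mul_apply]
          simp [Fin.sum_univ_succ, Matrix.mul_diagonal]
          exact hW 0 j.succ
        · rw [Matrix.mul_apply]
          simp [Fin.sum_univ_succ, Matrix.mul_diagonal]
          rw [mul_comm]; exact hW i.succ 0
        · have e := congrFun (congrFun h i) j
          simp only [Matrix.mul_apply (M := P * Matrix.diagonal d), Matrix.mul_diagonal,
            Matrix.of_apply] at e
          rw [Matrix.mul_apply]
          simp only [Matrix.mul_diagonal, Fin.sum_univ_succ, Matrix.of_apply, Fin.cons_zero,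
            Fin.cons_succ]
          have e2 : ∑ x, P i x * (M 0 0 * d x) * Q x j = M 0 0 * ∑ x, P i x * d x * Q x j := by
            rw [Finset.mul_sum]; exact Finset.sum_congr rfl fun _ _ => by ring
          rw [e2, ← e, hW i.succ j.succ]
          ring
    intro M
    obtain ⟨p, hp⟩ : ∃ p : Fin (n+1) × Fin (n+1),
        ∀ q : Fin (n+1) × Fin (n+1), M p.1 p.2 ∣ M q.1 q.2 := by
      have : ∀ s : Finset (Fin (n+1) × Fin (n+1)), 
          ∃ p : Fin (n+1) × Fin (n+1), ∀ q ∈ s, M p.1 p.2 ∣ M q.1 q.2 := by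
        intro s
        induction s using Finset.induction_on with
        | empty => exact ⟨(0, 0), by simp⟩
        | insert a s _ ih =>
          obtain ⟨p, hp⟩ := ih
          rcases ValuationRing.dvd_total (M p.1 p.2) (M a.1 a.2) with h | h
          · refine ⟨p, fun q hq => ?_⟩
            rcases Finset.mem_insert.1 hq with rfl | hq
            · exact h
            · exact hp q hq
          · refine ⟨a, fun q hq => ?_⟩
            rcases Finset.mem_insert.1 hq with rfl | hq
            · exact dvd_rfl
            · exact h.trans (hp q hq)
      obtain ⟨p, hp⟩ := this Finset.univ
      exact ⟨p, fun q => hp q (Finset.mem_univ _)⟩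
    obtain ⟨P, Q, d, hP, hQ, hd, h⟩ := key
      (M.submatrix (Equiv.swap 0 p.1) (Equiv.swap 0 p.2)) (by
        intro i j
        simpa using hp (Equiv.swap 0 p.1 i, Equiv.swap 0 p.2 j))
    refine ⟨P.submatrix (Equiv.swap 0 p.1) id, Q.submatrix id (Equiv.swap 0 p.2), d,
      ?_, ?_, hd, ?_⟩
    · rw [Matrix.det_permute]
      exact ((Equiv.Perm.sign _).isUnit.map (Int.castRingHom V)).mul hP
    · rw [Matrix.det_permute']
      exact ((Equiv.Perm.sign _).isUnit.map (Int.castRingHom V)).mul hQ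
    · ext i j
      have e := congrFun (congrFun h (Equiv.swap 0 p.1 i)) (Equiv.swap 0 p.2 j)
      simp only [Matrix.submatrix_apply, Equiv.swap_apply_self] at e
      simpa [Matrix.mul_apply, Matrix.mul_diagonal] using e

/-- Let `V` be a valuation ring whose fraction field `K` is
algebraically closed, and `n ≥ 1`. Then every `g ∈ GLₙ(K)` admits a Cartan
decomposition `g = g₁ * D * g₂` with `g₁, g₂` in the image of `GLₙ(V) → GLₙ(K)` and
`D` diagonal with nonzero entries `d₁, …, dₙ` satisfying `d_{i+1} / d_i ∈ V`. -/
theorem statement11 (V : Type*) [CommRing V] [IsDomain V] [ValuationRing V]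
    (K : Type*) [Field K] [Algebra V K] [IsFractionRing V K] [IsAlgClosed K]
    (n : ℕ) (hn : 1 ≤ n) (g : GL (Fin n) K) :
    ∃ (g₁ g₂ : GL (Fin n) V) (d : Fin n → K),
      (∀ i, d i ≠ 0) ∧
      (∀ i : Fin n, ∀ hi : (i : ℕ) + 1 < n,
        ∃ v : V, algebraMap V K v = d ⟨(i : ℕ) + 1, hi⟩ / d i) ∧
      (g : Matrix (Fin n) (Fin n) K) =
        (Matrix.GeneralLinearGroup.map (algebraMap V K) g₁ : Matrix (Fin n) (Fin n) K) *
          Matrix.diagonal d *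
          (Matrix.GeneralLinearGroup.map (algebraMap V K) g₂ : Matrix (Fin n) (Fin n) K) := by
  classical
  obtain ⟨b, hb⟩ := IsLocalization.exist_integer_multiples_of_finite (nonZeroDivisors V)
    (fun p : Fin n × Fin n => (g : Matrix (Fin n) (Fin n) K) p.1 p.2)
  choose N hN using hb
  have hb0 : algebraMap V K (b : V) ≠ 0 :=
    IsFractionRing.to_map_ne_zero_of_mem_nonZeroDivisors b.2
  obtain ⟨P, Q, d, hP, hQ, hd, h⟩ := smithAux V n (Matrix.of fun i j => N (i, j))
  let c := algebraMap V K (b : V)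
  have main : (g : Matrix (Fin n) (Fin n) K) = P.map (algebraMap V K) *
      Matrix.diagonal (fun i => algebraMap V K (d i) / c) * Q.map (algebraMap V K) := by
    ext i j
    have e := congrArg (algebraMap V K) (congrFun (congrFun h i) j)
    simp only [Matrix.of_apply, hN, Algebra.smul_def, Matrix.mul_apply (N := Q),
      Matrix.mul_diagonal, map_sum, map_mul] at e
    rw [Matrix.mul_apply]
    simp only [Matrix.mul_diagonal, Matrix.map_apply]
    apply mul_left_cancel₀ hb0
    rw [e, Finset.mul_sum]
    refine Finset.sum_congr rfl fun x _ => ?_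
    simp only [c]
    field_simp
  have hdet : ∀ i, algebraMap V K (d i) / c ≠ 0 := by
    have hg : (g : Matrix (Fin n) (Fin n) K).det ≠ 0 :=
      ((Matrix.isUnit_iff_isUnit_det _).1 g.isUnit).ne_zero
    rw [main, Matrix.det_mul, Matrix.det_mul, Matrix.det_diagonal] at hg
    intro i
    exact Finset.prod_ne_zero_iff.1 (right_ne_zero_of_mul (left_ne_zero_of_mul hg)) i
      (Finset.mem_univ i)
  refine ⟨Matrix.GeneralLinearGroup.mk'' P hP, Matrix.GeneralLinearGroup.mk'' Q hQ,
    fun i => algebraMap V K (d i) / c, hdet, ?_, main⟩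
  intro i hi
  obtain ⟨v, hv⟩ := hd i ⟨(i : ℕ) + 1, hi⟩ (Fin.le_def.2 (Nat.le_succ _))
  refine ⟨v, ?_⟩
  rw [eq_div_iff (hdet i)]
  simp only [hv, map_mul]
  ring
end
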